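/- Let p ≥ 2, s ∈ ℝ and t > 0. For N ≥ 1 and ξ ∈ ℝ set K_{N,ξ} = {ξ₁ ∈ ℝ : (ξ₁ ∈ [−N−2,−N] and ξ−ξ₁ ∈ [N,N+2]) or (ξ₁ ∈ [N,N+2] and ξ−ξ₁ ∈ [−N−2,−N])}, and for ξ ≠ 0 and ξ₁ ∈ K_{N,ξ} set φ(ξ,ξ₁) = (|ξ|^p − |ξ₁|^p − |ξ−ξ₁|^p) + i(−ξ³ + ξ₁³ + (ξ−ξ₁)³) ∈ ℂ, which is nonzero there. Then there exist c > 0 and N₀ ≥ 1 (depending on p, s, t) such that for every N ≥ N₀: ∫_{1/4 ≤ |ξ| ≤ 1/2} N^{2p} e^{−2t|ξ|^p} (1+ξ²)^{s} ξ² · | ∫_{K_{N,ξ}} (e^{t·φ(ξ,ξ₁)} − 1)/φ(ξ,ξ₁) dξ₁ |² dξ ≥ c. -/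

import Mathlib

open MeasureTheory Real

/-- The resonance set `K_{N,ξ}` from the ill-posedness argument. -/
def resonanceSet (N ξ : ℝ) : Set ℝ :=
  {ξ₁ : ℝ | (ξ₁ ∈ Set.Icc (-N - 2) (-N) ∧ ξ - ξ₁ ∈ Set.Icc N (N + 2)) ∨
            (ξ₁ ∈ Set.Icc N (N + 2) ∧ ξ - ξ₁ ∈ Set.Icc (-N - 2) (-N))}

/-- The phase function `φ(ξ, ξ₁)` from the ill-posedness argument. -/
noncomputable def phase (p ξ ξ₁ : ℝ) : ℂ :=
  ((|ξ| ^ p - |ξ₁| ^ p - |ξ - ξ₁| ^ p : ℝ) : ℂ) +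
    Complex.I * ((-ξ ^ 3 + ξ₁ ^ 3 + (ξ - ξ₁) ^ 3 : ℝ) : ℂ)

/-!
On the resonance set both `ξ₁` and `ξ - ξ₁` have size `N`, while `ξ` stays bounded. The
dissipative part of the phase is then at most `-N ^ p`. The dispersive part factors as
`-3 ξ ξ₁ (ξ - ξ₁)`, which is `O(N ^ 2)` and hence, as `2 ≤ p`, `O(N ^ p)`. Thus `φ` lies in a fixed
sector of the left half-plane, at distance comparable to `N ^ p` from the origin. There
`(exp (t φ) - 1) / φ` is close to `-1 / φ`, whose real part is bounded below by a multiple of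
`N ^ (-p)`: no cancellation can occur in the integral over `ξ₁`. So the inner integral is
of exact order `N ^ (-p)`, and the factor `N ^ (2 * p)` leaves a fixed multiple of the integral of
the weight in `ξ`.
-/

open Filter Set

lemma norm_exp_ofReal_mul (t : ℝ) (z : ℂ) :
    ‖Complex.exp (t * z)‖ = Real.exp (t * z.re) := by
  rw [Complex.norm_exp, Complex.re_ofReal_mul]

lemma eventually_exp_neg_mul_rpow_le {p t ε : ℝ} (ht : 0 < t) (hp : 0 < p) (hε : 0 < ε) :
    ∀ᶠ N : ℝ in atTop, Real.exp (-(t * N ^ p)) ≤ ε :=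
  (tendsto_exp_neg_atTop_nhds_zero.comp
    ((tendsto_rpow_atTop hp).const_mul_atTop ht)).eventually_le_const hε

lemma mul_setIntegral_le_setIntegral_mul {X : Type*} [MeasurableSpace X] {μ : Measure X}
    {S : Set X} {w g : X → ℝ} {κ : ℝ} (hS : MeasurableSet S) (hw : IntegrableOn w S μ)
    (hwg : IntegrableOn (fun x ↦ w x * g x) S μ) (hw₀ : ∀ x ∈ S, 0 ≤ w x)
    (hg : ∀ x ∈ S, κ ≤ g x) : κ * ∫ x in S, w x ∂μ ≤ ∫ x in S, w x * g x ∂μ := by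
  rw [mul_comm, ← integral_mul_const]
  exact setIntegral_mono_on (hw.mul_const κ) hwg hS fun x hx ↦
    mul_le_mul_of_nonneg_left (hg x hx) (hw₀ x hx)

/-- The multiplier `∫₀ᵗ e^{τ z} dτ = (e^{t z} - 1) / z` through which a phase `z` enters the Duhamel
formula. At `z = 0` the quotient is the junk value `0` instead of the limit `t`. -/
noncomputable def duhamelSymbol (t : ℝ) (z : ℂ) : ℂ :=
  (Complex.exp (t * z) - 1) / z

/-- The inner integral over `K_{N,ξ}`: up to explicit factors, the spatial Fourier transform at `ξ`
of the second Picard iterate. -/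
noncomputable def resonantIntegral (p t N ξ : ℝ) : ℂ :=
  ∫ ξ₁ in resonanceSet N ξ, duhamelSymbol t (phase p ξ ξ₁)

/-- The density with respect to which the `H^s` norm of the second Picard iterate is the `L²` norm
of the resonant integral: the squares of the dissipation factor `e^{-t|ξ|^p}`, of the Sobolev
weight, and of the derivative `ξ` in the nonlinearity. -/
noncomputable def picardWeight (p s t ξ : ℝ) : ℝ :=
  Real.exp (-(2 * t * |ξ| ^ p)) * (1 + ξ ^ 2) ^ s * ξ ^ 2

/-- The set of output frequencies `a ≤ |ξ| ≤ b`. -/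
def frequencyBand (a b : ℝ) : Set ℝ :=
  {ξ : ℝ | a ≤ |ξ| ∧ |ξ| ≤ b}

section DuhamelSymbol

variable {t M C : ℝ} {z : ℂ}

lemma measurable_duhamelSymbol (t : ℝ) : Measurable (duhamelSymbol t) := by
  unfold duhamelSymbol
  fun_prop

lemma norm_duhamelSymbol_le (ht : 0 ≤ t) (hM : 0 < M) (hre : z.re ≤ -M) :
    ‖duhamelSymbol t z‖ ≤ 2 / M := by
  have hexp : ‖Complex.exp (t * z)‖ ≤ 1 := by
    rw [norm_exp_ofReal_mul, Real.exp_le_one_iff]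
    exact mul_nonpos_of_nonneg_of_nonpos ht (by linarith)
  have hnum : ‖Complex.exp (t * z) - 1‖ ≤ 2 := by
    have := norm_sub_le (Complex.exp (t * z)) 1
    rw [norm_one] at this
    linarith
  have hden : M ≤ ‖z‖ := by linarith [Complex.abs_re_le_norm z, neg_abs_le z.re]
  rw [duhamelSymbol, norm_div]
  gcongr

lemma le_re_duhamelSymbol (t : ℝ) (z : ℂ) :
    (-z.re - Real.exp (t * z.re) * ‖z‖) / ‖z‖ ^ 2 ≤ (duhamelSymbol t z).re := by
  have hconj : duhamelSymbol t z =
      (Complex.exp (t * z) * star z - star z) / (‖z‖ ^ 2 : ℝ) := by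
    rw [duhamelSymbol, div_eq_mul_inv, Complex.inv_def, ← Complex.normSq_eq_norm_sq]
    push_cast
    rw [Complex.star_def]
    ring
  have hosc : -(Real.exp (t * z.re) * ‖z‖) ≤ (Complex.exp (t * z) * star z).re := by
    rw [← norm_exp_ofReal_mul, ← norm_star z, ← norm_mul]
    exact (abs_le.1 (Complex.abs_re_le_norm _)).1
  rw [hconj, Complex.div_ofReal_re, Complex.sub_re, Complex.star_def, Complex.conj_re,
    ← Complex.star_def]
  gcongr ?_ / _
  linarith

lemma le_re_duhamelSymbol_of_norm_le (ht : 0 ≤ t) (hM : 0 < M)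
    (hexp : Real.exp (-(t * M)) ≤ 1 / (2 * C)) (hre : z.re ≤ -M) (hnorm : ‖z‖ ≤ C * M) :
    1 / (2 * C ^ 2) / M ≤ (duhamelSymbol t z).re := by
  have hz : 0 < ‖z‖ := by linarith [Complex.abs_re_le_norm z, neg_abs_le z.re]
  have hC : 0 < C := pos_of_mul_pos_left (hz.trans_le hnorm) hM.le
  have hosc : Real.exp (t * z.re) * ‖z‖ ≤ M / 2 := calc
    Real.exp (t * z.re) * ‖z‖ ≤ Real.exp (-(t * M)) * (C * M) := by
      gcongr
      nlinarith
    _ ≤ 1 / (2 * C) * (C * M) := by gcongr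
    _ = M / 2 := by field_simp
  calc
    1 / (2 * C ^ 2) / M = (M / 2) / (C * M) ^ 2 := by field_simp
    _ ≤ (M / 2) / ‖z‖ ^ 2 := by gcongr
    _ ≤ (-z.re - Real.exp (t * z.re) * ‖z‖) / ‖z‖ ^ 2 := by
      gcongr
      linarith
    _ ≤ (duhamelSymbol t z).re := le_re_duhamelSymbol t z

end DuhamelSymbol

section Phase

variable {p r R ξ ξ₁ : ℝ}

lemma measurable_phase (p : ℝ) : Measurable fun q : ℝ × ℝ ↦ phase p q.1 q.2 := by
  unfold phase
  fun_prop

lemma phase_re (p ξ ξ₁ : ℝ) : (phase p ξ ξ₁).re = |ξ| ^ p - |ξ₁| ^ p - |ξ - ξ₁| ^ p := by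
  rw [phase, Complex.add_re, Complex.ofReal_re, Complex.re_mul_ofReal, Complex.I_re, zero_mul,
    add_zero]

lemma phase_im (p ξ ξ₁ : ℝ) : (phase p ξ ξ₁).im = -3 * ξ * ξ₁ * (ξ - ξ₁) := by
  rw [phase, Complex.add_im, Complex.ofReal_im, Complex.im_mul_ofReal, Complex.I_im]
  ring

lemma phase_re_le_neg_rpow (hp : 0 ≤ p) (hξ : |ξ| ≤ r) (hξ₁ : r ≤ |ξ₁|) (hdiff : r ≤ |ξ - ξ₁|) :
    (phase p ξ ξ₁).re ≤ -r ^ p := by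
  have hr : 0 ≤ r := (abs_nonneg ξ).trans hξ
  have hout : |ξ| ^ p ≤ r ^ p := by gcongr
  have hin : r ^ p ≤ |ξ₁| ^ p := by gcongr
  have hin' : r ^ p ≤ |ξ - ξ₁| ^ p := by gcongr
  rw [phase_re]
  linarith

lemma norm_phase_le (hp : 2 ≤ p) (hξ : |ξ| ≤ 1) (hR : 1 ≤ R) (hξ₁ : |ξ₁| ≤ R)
    (hdiff : |ξ - ξ₁| ≤ R) : ‖phase p ξ ξ₁‖ ≤ 5 * R ^ p := by
  have hre : |(phase p ξ ξ₁).re| ≤ 2 * R ^ p := by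
    have hout : |ξ| ^ p ≤ R ^ p := by gcongr; linarith
    have hin : |ξ₁| ^ p ≤ R ^ p := by gcongr
    have hin' : |ξ - ξ₁| ^ p ≤ R ^ p := by gcongr
    have hout₀ : 0 ≤ |ξ| ^ p := by positivity
    have hin₀ : 0 ≤ |ξ₁| ^ p := by positivity
    have hin₀' : 0 ≤ |ξ - ξ₁| ^ p := by positivity
    rw [phase_re, abs_le]
    constructor <;> linarith
  have him : |(phase p ξ ξ₁).im| ≤ 3 * R ^ p := calc
    |(phase p ξ ξ₁).im| = 3 * |ξ| * |ξ₁| * |ξ - ξ₁| := by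
      rw [phase_im, abs_mul, abs_mul, abs_mul, abs_neg, Nat.abs_ofNat]
    _ ≤ 3 * 1 * R * R := by gcongr
    _ = 3 * R ^ (2 : ℝ) := by rw [rpow_two]; ring
    _ ≤ 3 * R ^ p := by gcongr
  linarith [Complex.norm_le_abs_re_add_abs_im (phase p ξ ξ₁)]

end Phase

section ResonanceSet

variable {p t N ξ ξ₁ : ℝ}

lemma measurableSet_setOf_mem_resonanceSet (N : ℝ) :
    MeasurableSet {q : ℝ × ℝ | q.2 ∈ resonanceSet N q.1} := by
  have hfst : Measurable fun q : ℝ × ℝ ↦ q.2 := measurable_snd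
  have hdiff : Measurable fun q : ℝ × ℝ ↦ q.1 - q.2 := by fun_prop
  exact ((hfst measurableSet_Icc).inter (hdiff measurableSet_Icc)).union
    ((hfst measurableSet_Icc).inter (hdiff measurableSet_Icc))

lemma measurableSet_resonanceSet (N ξ : ℝ) : MeasurableSet (resonanceSet N ξ) :=
  (measurableSet_setOf_mem_resonanceSet N).preimage measurable_prodMk_left

lemma abs_mem_Icc_of_mem_resonanceSet (hN : 0 ≤ N) (h : ξ₁ ∈ resonanceSet N ξ) :
    |ξ₁| ∈ Icc N (N + 2) ∧ |ξ - ξ₁| ∈ Icc N (N + 2) := by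
  rcases h with ⟨⟨hl, hu⟩, hl', hu'⟩ | ⟨⟨hl, hu⟩, hl', hu'⟩
  · rw [abs_of_nonpos (hu.trans (neg_nonpos.2 hN)), abs_of_nonneg (hN.trans hl')]
    exact ⟨⟨by linarith, by linarith⟩, hl', hu'⟩
  · rw [abs_of_nonneg (hN.trans hl), abs_of_nonpos (hu'.trans (neg_nonpos.2 hN))]
    exact ⟨⟨hl, hu⟩, by linarith, by linarith⟩

lemma volume_resonanceSet_le (N ξ : ℝ) : volume (resonanceSet N ξ) ≤ 4 := calc
  volume (resonanceSet N ξ) ≤ volume (Icc (-N - 2) (-N) ∪ Icc N (N + 2)) :=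
    measure_mono fun _ h ↦ h.imp And.left And.left
  _ ≤ volume (Icc (-N - 2) (-N)) + volume (Icc N (N + 2)) := measure_union_le _ _
  _ = 4 := by
    rw [Real.volume_Icc, Real.volume_Icc, ← ENNReal.ofReal_add (by linarith) (by linarith)]
    ring_nf
    exact ENNReal.ofReal_ofNat 4

lemma volume_resonanceSet_lt_top (N ξ : ℝ) : volume (resonanceSet N ξ) < ⊤ :=
  (volume_resonanceSet_le N ξ).trans_lt (by finiteness)

lemma two_sub_abs_le_volume_resonanceSet (N ξ : ℝ) :
    2 - |ξ| ≤ volume.real (resonanceSet N ξ) := by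
  have hsub : Icc (N + max 0 ξ) (N + 2 + min 0 ξ) ⊆ resonanceSet N ξ := by
    rintro x ⟨hl, hu⟩
    have := le_max_left 0 ξ
    have := le_max_right 0 ξ
    have := min_le_left 0 ξ
    have := min_le_right 0 ξ
    exact Or.inr ⟨⟨by linarith, by linarith⟩, by linarith, by linarith⟩
  calc
    2 - |ξ| = N + 2 + min 0 ξ - (N + max 0 ξ) := by
      have := max_sub_min_eq_abs 0 ξ
      rw [sub_zero] at this
      linarith
    _ ≤ volume.real (Icc (N + max 0 ξ) (N + 2 + min 0 ξ)) := by
      rw [Real.volume_real_Icc]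
      exact le_max_left _ _
    _ ≤ volume.real (resonanceSet N ξ) :=
      measureReal_mono hsub (volume_resonanceSet_lt_top N ξ).ne

lemma phase_re_le_of_mem_resonanceSet (hp : 0 ≤ p) (hξ : |ξ| ≤ N) (h : ξ₁ ∈ resonanceSet N ξ) :
    (phase p ξ ξ₁).re ≤ -N ^ p :=
  have habs := abs_mem_Icc_of_mem_resonanceSet ((abs_nonneg ξ).trans hξ) h
  phase_re_le_neg_rpow hp hξ habs.1.1 habs.2.1

lemma norm_phase_le_of_mem_resonanceSet (hp : 2 ≤ p) (hN : 1 ≤ N) (hξ : |ξ| ≤ 1)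
    (h : ξ₁ ∈ resonanceSet N ξ) : ‖phase p ξ ξ₁‖ ≤ 5 * 3 ^ p * N ^ p := by
  obtain ⟨⟨-, hξ₁⟩, -, hdiff⟩ := abs_mem_Icc_of_mem_resonanceSet (by linarith) h
  rw [mul_assoc, ← mul_rpow (by norm_num) (by linarith)]
  exact norm_phase_le hp hξ (by linarith) (by linarith) (by linarith)

end ResonanceSet

section ResonantIntegral

variable {p t N ξ : ℝ}

lemma measurable_duhamelSymbol_phase (p t : ℝ) :
    Measurable fun q : ℝ × ℝ ↦ duhamelSymbol t (phase p q.1 q.2) :=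
  (measurable_duhamelSymbol t).comp (measurable_phase p)

lemma stronglyMeasurable_resonantIntegral (p t N : ℝ) :
    StronglyMeasurable (resonantIntegral p t N) := by
  have hind : resonantIntegral p t N = fun ξ ↦ ∫ ξ₁,
      {q : ℝ × ℝ | q.2 ∈ resonanceSet N q.1}.indicator
        (fun q ↦ duhamelSymbol t (phase p q.1 q.2)) (ξ, ξ₁) := by
    funext ξ
    rw [resonantIntegral, ← integral_indicator (measurableSet_resonanceSet N ξ)]
    rfl
  rw [hind]
  exact StronglyMeasurable.integral_prod_right ((measurable_duhamelSymbol_phase p t).indicator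
    (measurableSet_setOf_mem_resonanceSet N)).stronglyMeasurable

lemma norm_duhamelSymbol_phase_le (hp : 0 ≤ p) (ht : 0 ≤ t) (hN : 0 < N) (hξ : |ξ| ≤ N) :
    ∀ ξ₁ ∈ resonanceSet N ξ, ‖duhamelSymbol t (phase p ξ ξ₁)‖ ≤ 2 / N ^ p := fun _ h ↦
  norm_duhamelSymbol_le ht (rpow_pos_of_pos hN p) (phase_re_le_of_mem_resonanceSet hp hξ h)

lemma integrableOn_duhamelSymbol_phase (hp : 0 ≤ p) (ht : 0 ≤ t) (hN : 0 < N) (hξ : |ξ| ≤ N) :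
    IntegrableOn (fun ξ₁ ↦ duhamelSymbol t (phase p ξ ξ₁)) (resonanceSet N ξ) :=
  .of_bound (volume_resonanceSet_lt_top N ξ)
    ((measurable_duhamelSymbol_phase p t).comp measurable_prodMk_left).aestronglyMeasurable
    (2 / N ^ p) (ae_restrict_of_forall_mem (measurableSet_resonanceSet N ξ)
      (norm_duhamelSymbol_phase_le hp ht hN hξ))

lemma rpow_mul_norm_resonantIntegral_le (hp : 0 ≤ p) (ht : 0 ≤ t) (hN : 0 < N) (hξ : |ξ| ≤ N) :
    N ^ p * ‖resonantIntegral p t N ξ‖ ≤ 8 := by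
  have hvol : volume.real (resonanceSet N ξ) ≤ 4 :=
    ENNReal.toReal_mono (by finiteness) (volume_resonanceSet_le N ξ)
  calc
    N ^ p * ‖resonantIntegral p t N ξ‖ ≤ N ^ p * (2 / N ^ p * 4) := by
      gcongr
      refine (norm_setIntegral_le_of_norm_le_const (volume_resonanceSet_lt_top N ξ)
        (norm_duhamelSymbol_phase_le hp ht hN hξ)).trans ?_
      gcongr
    _ = 8 := by
      have := rpow_pos_of_pos hN p
      field_simp
      norm_num

lemma le_rpow_mul_norm_resonantIntegral (hp : 2 ≤ p) (ht : 0 ≤ t) (hN : 1 ≤ N) (hξ : |ξ| ≤ 1)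
    (hexp : Real.exp (-(t * N ^ p)) ≤ 1 / (2 * (5 * 3 ^ p))) :
    1 / (2 * (5 * 3 ^ p) ^ 2) ≤ N ^ p * ‖resonantIntegral p t N ξ‖ := by
  have hp₀ : 0 ≤ p := by linarith
  have hN₀ : 0 < N := by linarith
  have hNp : 0 < N ^ p := rpow_pos_of_pos hN₀ p
  have hint := integrableOn_duhamelSymbol_phase hp₀ ht hN₀ (hξ.trans hN)
  have hlower : ∀ ξ₁ ∈ resonanceSet N ξ,
      1 / (2 * (5 * 3 ^ p) ^ 2) / N ^ p ≤ (duhamelSymbol t (phase p ξ ξ₁)).re := fun _ h ↦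
    le_re_duhamelSymbol_of_norm_le ht hNp hexp
      (phase_re_le_of_mem_resonanceSet hp₀ (hξ.trans hN) h)
      (norm_phase_le_of_mem_resonanceSet hp hN hξ h)
  rw [← div_le_iff₀' hNp]
  calc
    1 / (2 * (5 * 3 ^ p) ^ 2) / N ^ p
        ≤ 1 / (2 * (5 * 3 ^ p) ^ 2) / N ^ p * volume.real (resonanceSet N ξ) :=
      le_mul_of_one_le_right (by positivity)
        (by linarith [two_sub_abs_le_volume_resonanceSet N ξ])
    _ ≤ ∫ ξ₁ in resonanceSet N ξ, (duhamelSymbol t (phase p ξ ξ₁)).re :=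
      setIntegral_ge_of_const_le_real (measurableSet_resonanceSet N ξ)
        (volume_resonanceSet_lt_top N ξ).ne hlower hint.re
    _ = (resonantIntegral p t N ξ).re := integral_re hint
    _ ≤ ‖resonantIntegral p t N ξ‖ := Complex.re_le_norm _

end ResonantIntegral

section FrequencyBand

variable {p a b : ℝ}

lemma isCompact_frequencyBand (a b : ℝ) : IsCompact (frequencyBand a b) :=
  (isCompact_Icc (a := -b) (b := b)).of_isClosed_subset
    (isClosed_Icc.preimage continuous_abs) fun _ h ↦ abs_le.1 h.2

lemma volume_frequencyBand_pos (ha : 0 ≤ a) (hab : a < b) : 0 < volume (frequencyBand a b) := by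
  have hsub : Ioo a b ⊆ frequencyBand a b := fun ξ hξ ↦
    ⟨hξ.1.le.trans (le_abs_self ξ), (abs_of_nonneg (ha.trans hξ.1.le)).trans_le hξ.2.le⟩
  exact (isOpen_Ioo.measure_pos volume (nonempty_Ioo.2 hab)).trans_le (measure_mono hsub)

lemma continuous_picardWeight (hp : 0 ≤ p) (s t : ℝ) : Continuous (picardWeight p s t) := by
  have hbracket : Continuous fun ξ : ℝ ↦ (1 + ξ ^ 2) ^ s :=
    (by fun_prop : Continuous fun ξ : ℝ ↦ 1 + ξ ^ 2).rpow_const fun ξ ↦ Or.inl (by positivity)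
  unfold picardWeight
  fun_prop

lemma picardWeight_nonneg (p s t ξ : ℝ) : 0 ≤ picardWeight p s t ξ := by
  unfold picardWeight
  positivity

lemma picardWeight_ne_zero (p s t : ℝ) {ξ : ℝ} (hξ : ξ ≠ 0) : picardWeight p s t ξ ≠ 0 := by
  unfold picardWeight
  positivity

lemma integrableOn_picardWeight (hp : 0 ≤ p) (s t a b : ℝ) :
    IntegrableOn (picardWeight p s t) (frequencyBand a b) :=
  (continuous_picardWeight hp s t).continuousOn.integrableOn_compact (isCompact_frequencyBand a b)

lemma setIntegral_picardWeight_pos (hp : 0 ≤ p) (s t : ℝ) (ha : 0 < a) (hab : a < b) :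
    0 < ∫ ξ in frequencyBand a b, picardWeight p s t ξ := by
  rw [setIntegral_pos_iff_support_of_nonneg_ae (ae_of_all _ (picardWeight_nonneg p s t))
    (integrableOn_picardWeight hp s t a b), inter_eq_right.2]
  · exact volume_frequencyBand_pos ha.le hab
  · exact fun ξ hξ ↦ picardWeight_ne_zero p s t (abs_pos.1 (ha.trans_le hξ.1))

end FrequencyBand

lemma integrableOn_picardWeight_mul_resonantIntegral {p t N b : ℝ} (hp : 0 ≤ p) (ht : 0 ≤ t)
    (hN : 0 < N) (hb : b ≤ N) (s a : ℝ) :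
    IntegrableOn (fun ξ ↦ picardWeight p s t ξ * (N ^ p * ‖resonantIntegral p t N ξ‖) ^ 2)
      (frequencyBand a b) := by
  have hcompact := isCompact_frequencyBand a b
  refine IntegrableOn.continuousOn_mul (continuous_picardWeight hp s t).continuousOn ?_ hcompact
  refine .of_bound hcompact.measure_lt_top ?_ (8 ^ 2)
    (ae_restrict_of_forall_mem hcompact.measurableSet fun ξ hξ ↦ ?_)
  · have := (stronglyMeasurable_resonantIntegral p t N).norm
    exact ((this.const_mul _).pow 2).aestronglyMeasurable
  · rw [norm_of_nonneg (by positivity)]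
    gcongr
    exact rpow_mul_norm_resonantIntegral_le hp ht hN (hξ.2.trans hb)

theorem stmt_13 (p s t : ℝ) (hp : 2 ≤ p) (ht : 0 < t) :
    ∃ c : ℝ, 0 < c ∧ ∃ N₀ : ℝ, 1 ≤ N₀ ∧
      ∀ N : ℝ, N₀ ≤ N →
        c ≤ ∫ ξ in {ξ : ℝ | 1 / 4 ≤ |ξ| ∧ |ξ| ≤ 1 / 2},
              N ^ (2 * p) * Real.exp (-(2 * t * |ξ| ^ p)) * (1 + ξ ^ 2) ^ s * ξ ^ 2 *
                ‖∫ ξ₁ in resonanceSet N ξ,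
                    (Complex.exp (t * phase p ξ ξ₁) - 1) / phase p ξ ξ₁‖ ^ 2 := by
  have hp₀ : 0 < p := by linarith
  obtain ⟨N₁, hN₁⟩ := eventually_atTop.1 <| eventually_exp_neg_mul_rpow_le ht hp₀
    (by positivity : (0 : ℝ) < 1 / (2 * (5 * 3 ^ p)))
  set S := frequencyBand (1 / 4) (1 / 2)
  have hweight : 0 < ∫ ξ in S, picardWeight p s t ξ :=
    setIntegral_picardWeight_pos hp₀.le s t (by norm_num) (by norm_num)
  refine ⟨(1 / (2 * (5 * 3 ^ p) ^ 2)) ^ 2 * ∫ ξ in S, picardWeight p s t ξ, by positivity,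
    max 1 N₁, le_max_left _ _, fun N hN ↦ ?_⟩
  obtain ⟨hN, hNN₁⟩ := max_le_iff.1 hN
  calc
    _ ≤ ∫ ξ in S, picardWeight p s t ξ * (N ^ p * ‖resonantIntegral p t N ξ‖) ^ 2 :=
      mul_setIntegral_le_setIntegral_mul (isCompact_frequencyBand _ _).measurableSet
        (integrableOn_picardWeight hp₀.le s t _ _)
        (integrableOn_picardWeight_mul_resonantIntegral hp₀.le ht.le (by linarith)
          (by linarith) s _)
        (fun ξ _ ↦ picardWeight_nonneg p s t ξ) fun ξ hξ ↦ by
          gcongr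
          exact le_rpow_mul_norm_resonantIntegral hp ht.le hN (by linarith [hξ.2]) (hN₁ N hNN₁)
    _ = _ := by
      congr 1 with ξ
      rw [two_mul, rpow_add (by linarith), picardWeight, resonantIntegral]
      simp only [duhamelSymbol]
      ring
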